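/- Let L > 3 be an odd integer not divisible by 3. Suppose L has a prime factor p̂ such that p̂ is a safe prime with p̂ ≡ 3 (mod 4), p̂² does not divide L, and every prime factor of L other than p̂ is congruent to 5 modulo 8. Then M(L,3) = M^e(L,3) = (L − 3)/4. -/

import Mathlib

open Finset

/-- The set of differences of a codeword `I ⊆ ℤ_L`. -/
def dset {L : ℕ} (I : Finset (ZMod L)) : Finset (ZMod L) :=
  (I ×ˢ I).image fun p => p.1 - p.2

/-- The set of nonzero differences. -/
def dstar {L : ℕ} (I : Finset (ZMod L)) : Finset (ZMod L) := dset I \ {0}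

/-- A conflict-avoiding code of length `L` and weight `ω`. -/
def IsCAC (L ω : ℕ) (C : Finset (Finset (ZMod L))) : Prop :=
  (∀ I ∈ C, I.card = ω) ∧
  ∀ I ∈ C, ∀ J ∈ C, I ≠ J → Disjoint (dstar I) (dstar J)

/-- `M(L,ω)`: the maximum size of a CAC of length `L` and weight `ω`. -/
noncomputable def MCAC (L ω : ℕ) : ℕ :=
  sSup {n | ∃ C : Finset (Finset (ZMod L)), IsCAC L ω C ∧ C.card = n}

/-- An equi-difference codeword of weight three: `I = {0, g, 2g}` for some generator
`1 ≤ g ≤ L/2`. -/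
def IsEquiDiff {L : ℕ} (I : Finset (ZMod L)) : Prop :=
  ∃ g : ℕ, 1 ≤ g ∧ 2 * g ≤ L ∧ I = {0, (g : ZMod L), ((2 * g : ℕ) : ZMod L)}

/-- `M^e(L,ω)`: the maximum size of a CAC of length `L` and weight `ω` all of whose
codewords are equi-difference. -/
noncomputable def MeCAC (L ω : ℕ) : ℕ :=
  sSup {n | ∃ C : Finset (Finset (ZMod L)),
    IsCAC L ω C ∧ (∀ I ∈ C, IsEquiDiff I) ∧ C.card = n}

/-- The leave of a CAC `C` of length `L`: `Λ = ℤ_L \ ⋃_{I ∈ C} d(I)`. -/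
def leave {L : ℕ} (C : Finset (Finset (ZMod L))) : Set (ZMod L) :=
  Set.univ \ ⋃ I ∈ C, (dset I : Set (ZMod L))

/-!
A codeword of weight three has at least four nonzero differences when `L` is prime to `6`, so a code
has at most `(L - 1) / 4` codewords. Equi-difference codewords `{0, g, 2g}` have the differences
`±g, ±2g`, so they form a code when `g` runs, up to sign, through a set `G` with `-G = G` and
`2G ∩ G = ∅`; the task is to find such a `G` with `2|G| + 3 = L`.

Solutions extend along subgroups: if `2|Q| + 1 = |A / K|` and `2|N| + d = |K|`, then the union of
`N` and the preimage of `Q` is a solution in `A` with the same defect `d`. In a field with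
`q ≡ 5 (mod 8)` elements `-1` is a square and `2` is not, so the nonzero squares have defect `1`,
and hence so does `ℤ_m` when all prime factors of `m` are `5` modulo `8`. Modulo the exceptional
prime `p ≡ 3 (mod 4)` the doubling map permutes the `(p - 1) / 2` pairs `±x` in a single cycle of
odd length; taking every second pair `±4ⁱ` leaves defect `3`.
-/

section DoublingFree

variable {A B : Type*} [AddCommGroup A] [AddCommGroup B] {d : ℕ}

/-- A set `G` of an additive group with `-G ⊆ G` and `2G ∩ G = ∅`. Up to sign, such sets are the
sets of generators of equi-difference codes of weight three. -/
structure IsSymmDoublingFree (G : Set A) : Prop where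
  neg_mem : ∀ x ∈ G, -x ∈ G
  two_nsmul_notMem : ∀ x ∈ G, 2 • x ∉ G

/-- Twice the size of some symmetric doubling-free set `G` of the finite group `A` falls short of
the order of `A` by `d`. In a group of odd order `G`, `2G` and `{0}` are disjoint, so the optimum
is `d = 1`. -/
def HasDoublingDefect (A : Type*) [AddCommGroup A] (d : ℕ) : Prop :=
  ∃ G : Set A, IsSymmDoublingFree G ∧ Nat.card A = 2 * G.ncard + d

lemma HasDoublingDefect.odd_card (hA : HasDoublingDefect A d) (hd : Odd d) :
    Odd (Nat.card A) := by
  obtain ⟨G, -, hcard⟩ := hA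
  rw [hcard]
  exact (even_two_mul _).add_odd hd

lemma two_nsmul_injective_of_odd_card (hA : Odd (Nat.card A)) :
    Function.Injective fun x : A ↦ 2 • x :=
  (Nat.coprime_two_right.2 hA).nsmul_right_bijective.injective

lemma nsmul_ne_zero_of_coprime_card {n : ℕ} (hn : (Nat.card A).Coprime n) {x : A} (hx : x ≠ 0) :
    n • x ≠ 0 := fun h ↦
  hx (hn.nsmul_right_bijective.injective (h.trans (nsmul_zero n).symm))

lemma IsSymmDoublingFree.ne_zero {G : Set A} (hG : IsSymmDoublingFree G) {x : A} (hx : x ∈ G) :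
    x ≠ 0 := by
  rintro rfl
  exact hG.two_nsmul_notMem 0 hx (by rwa [nsmul_zero])

lemma IsSymmDoublingFree.preimage_union_image {K : AddSubgroup A} {Q : Set (A ⧸ K)} {N : Set K}
    (hQ : IsSymmDoublingFree Q) (hN : IsSymmDoublingFree N) (hodd : Odd (Nat.card (A ⧸ K))) :
    IsSymmDoublingFree (QuotientAddGroup.mk ⁻¹' Q ∪ Subtype.val '' N : Set A) where
  neg_mem := by
    rintro x (hx | ⟨y, hy, rfl⟩)
    · exact Or.inl (hQ.neg_mem _ hx)
    · exact Or.inr ⟨-y, hN.neg_mem y hy, rfl⟩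
  two_nsmul_notMem := by
    rintro x (hx | ⟨y, hy, rfl⟩) (h2x | ⟨z, hz, hzx⟩)
    · exact hQ.two_nsmul_notMem _ hx h2x
    · have h2x : 2 • (x : A ⧸ K) = 0 :=
        (QuotientAddGroup.eq_zero_iff (2 • x)).2 (hzx ▸ z.2)
      exact nsmul_ne_zero_of_coprime_card (Nat.coprime_two_right.2 hodd) (hQ.ne_zero hx) h2x
    · exact hQ.ne_zero h2x ((QuotientAddGroup.eq_zero_iff _).2 (2 • y).2)
    · obtain rfl : z = 2 • y := Subtype.ext hzx
      exact hN.two_nsmul_notMem y hy hz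

lemma ncard_preimage_quotientMk (K : AddSubgroup A) (Q : Set (A ⧸ K)) :
    (QuotientAddGroup.mk ⁻¹' Q : Set A).ncard = Nat.card K * Q.ncard := by
  rw [← Nat.card_coe_set_eq, ← Nat.card_coe_set_eq, ← Nat.card_prod]
  exact Nat.card_congr (QuotientAddGroup.preimageMkEquivAddSubgroupProdSet K Q)

theorem HasDoublingDefect.of_quotient [Finite A] {K : AddSubgroup A}
    (hquot : HasDoublingDefect (A ⧸ K) 1) (hK : HasDoublingDefect K d) :
    HasDoublingDefect A d := by
  have hodd : Odd (Nat.card (A ⧸ K)) := hquot.odd_card odd_one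
  obtain ⟨Q, hQ, hQcard⟩ := hquot
  obtain ⟨N, hN, hNcard⟩ := hK
  refine ⟨_, hQ.preimage_union_image hN hodd, ?_⟩
  have hdisj : Disjoint (QuotientAddGroup.mk ⁻¹' Q : Set A) (Subtype.val '' N) := by
    rw [Set.disjoint_right]
    rintro _ ⟨y, -, rfl⟩ hy
    exact hQ.ne_zero hy ((QuotientAddGroup.eq_zero_iff _).2 y.2)
  calc Nat.card A
      = Nat.card (A ⧸ K) * Nat.card K := K.card_eq_card_quotient_mul_card_addSubgroup
    _ = 2 * (Nat.card K * Q.ncard) + Nat.card K := by rw [hQcard]; ring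
    _ = 2 * (Nat.card K * Q.ncard) + (2 * N.ncard + d) := by rw [← hNcard]
    _ = 2 * (Nat.card K * Q.ncard + N.ncard) + d := by ring
    _ = _ := by
      rw [Set.ncard_union_eq hdisj, ncard_preimage_quotientMk,
        Set.ncard_image_of_injective N Subtype.val_injective]

lemma HasDoublingDefect.congr (e : A ≃+ B) (hA : HasDoublingDefect A d) :
    HasDoublingDefect B d := by
  obtain ⟨G, hG, hcard⟩ := hA
  refine ⟨e '' G, ⟨?_, ?_⟩, ?_⟩
  · rintro _ ⟨x, hx, rfl⟩
    exact ⟨-x, hG.neg_mem x hx, map_neg e x⟩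
  · rintro _ ⟨x, hx, rfl⟩ h
    rw [← map_nsmul, e.injective.mem_set_image] at h
    exact hG.two_nsmul_notMem x hx h
  · rw [← Nat.card_congr e.toEquiv, hcard, Set.ncard_image_of_injective G e.injective]

theorem HasDoublingDefect.zmod_mul {a b : ℕ} [NeZero a] [NeZero b]
    (hb : HasDoublingDefect (ZMod b) 1) (ha : HasDoublingDefect (ZMod a) d) :
    HasDoublingDefect (ZMod (a * b)) d := by
  let f : ZMod (a * b) →+ ZMod b := (ZMod.castHom (dvd_mul_left b a) (ZMod b)).toAddMonoidHom
  have hf : Function.Surjective f := ZMod.castHom_surjective (dvd_mul_left b a)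
  let e : ZMod (a * b) ⧸ f.ker ≃+ ZMod b := QuotientAddGroup.quotientKerEquivOfSurjective f hf
  have hker : Nat.card (ZMod a) = Nat.card f.ker := by
    refine Nat.eq_of_mul_eq_mul_left (NeZero.pos b) ?_
    calc b * Nat.card (ZMod a) = Nat.card (ZMod (a * b)) := by
          rw [Nat.card_zmod, Nat.card_zmod, mul_comm]
      _ = Nat.card (ZMod (a * b) ⧸ f.ker) * Nat.card f.ker :=
          f.ker.card_eq_card_quotient_mul_card_addSubgroup
      _ = b * Nat.card f.ker := by rw [Nat.card_congr e.toEquiv, Nat.card_zmod]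
  exact .of_quotient (hb.congr e.symm) (ha.congr (addEquivOfAddCyclicCardEq hker))

lemma card_eq_two_mul_ncard_add_one [Finite A] {G : Set A}
    (hinj : Function.Injective fun x : A ↦ 2 • x) (h0 : (0 : A) ∉ G)
    (hG : ∀ x ≠ 0, 2 • x ∈ G ↔ x ∉ G) : Nat.card A = 2 * G.ncard + 1 := by
  have hpre : (fun x : A ↦ 2 • x) ⁻¹' G = (insert 0 G)ᶜ := by
    ext x
    by_cases hx : x = 0
    · simp [hx, h0]
    · simp [hx, hG x hx]
  have hpre_card : ((insert 0 G)ᶜ : Set A).ncard = G.ncard := by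
    rw [← hpre, Set.ncard_preimage_of_injective_subset_range hinj]
    exact fun y _ ↦ Finite.surjective_of_injective hinj y
  have := Set.ncard_add_ncard_compl (insert 0 G)
  rw [hpre_card, Set.ncard_insert_of_notMem h0] at this
  omega

end DoublingFree

section FiniteField

variable {F : Type*} [Field F] [Fintype F]

lemma quadraticChar_neg_of_card_mod_four [DecidableEq F] (hF : Fintype.card F % 4 = 1) (x : F) :
    quadraticChar F (-x) = quadraticChar F x := by
  have hchar : ringChar F ≠ 2 := FiniteField.even_card_iff_char_two.not.2 (by omega)
  rw [← neg_one_mul, map_mul, quadraticChar_neg_one hchar, ZMod.χ₄_nat_one_mod_four hF, one_mul]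

lemma quadraticChar_two_nsmul_of_card_mod_eight [DecidableEq F] (hF : Fintype.card F % 8 = 5)
    (x : F) : quadraticChar F (2 • x) = -quadraticChar F x := by
  have hchar : ringChar F ≠ 2 := FiniteField.even_card_iff_char_two.not.2 (by omega)
  have htwo : quadraticChar F 2 = -1 := by
    rw [quadraticChar_two hchar, ZMod.χ₈_nat_eq_if_mod_eight, if_neg (by omega),
      if_neg (by omega)]
  rw [two_nsmul, ← two_mul, map_mul, htwo, neg_one_mul]

theorem hasDoublingDefect_one_of_card_mod_eight (hF : Fintype.card F % 8 = 5) :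
    HasDoublingDefect F 1 := by
  classical
  have hodd : Odd (Nat.card F) := by
    rw [Nat.card_eq_fintype_card, Nat.odd_iff]
    omega
  refine ⟨{x | quadraticChar F x = 1}, ⟨fun x hx ↦ ?_, fun x hx h2x ↦ ?_⟩,
    card_eq_two_mul_ncard_add_one (two_nsmul_injective_of_odd_card hodd) (by simp) fun x hx ↦ ?_⟩
  · exact (quadraticChar_neg_of_card_mod_four (by omega) x).trans hx
  · rw [Set.mem_ofPred_eq] at hx h2x
    rw [quadraticChar_two_nsmul_of_card_mod_eight hF, hx] at h2x
    norm_num at h2x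
  · rw [Set.mem_ofPred_eq, Set.mem_ofPred_eq, quadraticChar_two_nsmul_of_card_mod_eight hF,
      ← quadraticChar_eq_neg_one_iff_not_one hx, neg_eq_iff_eq_neg]

theorem hasDoublingDefect_one_zmod {m : ℕ} (hm : ∀ p : ℕ, p.Prime → p ∣ m → p % 8 = 5) :
    HasDoublingDefect (ZMod m) 1 := by
  induction m using induction_on_primes with
  | zero => exact absurd (hm 2 Nat.prime_two (dvd_zero 2)) (by norm_num)
  | one => exact ⟨∅, ⟨by simp, by simp⟩, by simp⟩
  | prime_mul p a hp ih =>
    have : Fact p.Prime := ⟨hp⟩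
    have : NeZero a := ⟨by
      rintro rfl
      exact absurd (hm 2 Nat.prime_two (dvd_zero 2)) (by norm_num)⟩
    refine (ih fun q hq hqa ↦ hm q hq (hqa.mul_left p)).zmod_mul
      (hasDoublingDefect_one_of_card_mod_eight ?_)
    rw [ZMod.card]
    exact hm p hp (dvd_mul_right p a)

end FiniteField

section FourPowers

variable {R : Type*} [CommRing R]

/-- The elements `±4ⁱ` with `i < n / 2`, where `n` is the multiplicative order of `4`. -/
def signedFourPowers (R : Type*) [CommRing R] : Set R :=
  {x | ∃ i < orderOf (4 : R) / 2, x = 4 ^ i ∨ x = -4 ^ i}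

lemma isSymmDoublingFree_signedFourPowers : IsSymmDoublingFree (signedFourPowers R) where
  neg_mem := by
    rintro _ ⟨i, hi, rfl | rfl⟩
    · exact ⟨i, hi, Or.inr rfl⟩
    · exact ⟨i, hi, Or.inl (neg_neg _)⟩
  two_nsmul_notMem := by
    rintro x ⟨i, hi, hx⟩ ⟨j, hj, h2x⟩
    -- Squaring removes the signs and turns the doubling into an odd power of `4`.
    have hsq : (4 : R) ^ (2 * i + 1) = 4 ^ (2 * j) := by
      have hxx : x ^ 2 = 4 ^ (2 * i) := by
        rcases hx with rfl | rfl <;> ring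
      have h2xx : (2 • x) ^ 2 = 4 ^ (2 * j) := by
        rcases h2x with h | h <;> rw [h] <;> ring
      rw [← h2xx, pow_succ, ← hxx, two_nsmul]
      ring
    have := pow_injOn_Iio_orderOf (x := (4 : R)) (by grind) (by grind) hsq
    omega

lemma four_pow_ne_neg_four_pow (h2 : (2 : R) ≠ 0) {i j : ℕ} (hi : i < orderOf (4 : R) / 2)
    (hj : j < orderOf (4 : R) / 2) : (4 : R) ^ i ≠ -4 ^ j := by
  intro h
  have hsq : (4 : R) ^ (2 * i) = 4 ^ (2 * j) := by
    rw [mul_comm, mul_comm 2 j, pow_mul, pow_mul, h, neg_sq]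
  obtain rfl : i = j := by
    have := pow_injOn_Iio_orderOf (x := (4 : R)) (by grind) (by grind) hsq
    omega
  have hunit : IsUnit ((4 : R) ^ i) :=
    (orderOf_pos_iff.1 (by omega : 0 < orderOf (4 : R))).isUnit.pow i
  exact h2 (hunit.mul_left_eq_zero.1 (by linear_combination h))

lemma ncard_signedFourPowers (h2 : (2 : R) ≠ 0) :
    (signedFourPowers R).ncard = 2 * (orderOf (4 : R) / 2) := by
  set k := orderOf (4 : R) / 2
  have hunion : signedFourPowers R =
      (fun i ↦ (4 : R) ^ i) '' Set.Iio k ∪ (fun i ↦ -(4 : R) ^ i) '' Set.Iio k := by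
    ext x
    simp only [signedFourPowers, Set.mem_ofPred_eq, Set.mem_union, Set.mem_image, Set.mem_Iio]
    grind
  have hdisj : Disjoint ((fun i ↦ (4 : R) ^ i) '' Set.Iio k)
      ((fun i ↦ -(4 : R) ^ i) '' Set.Iio k) := by
    rw [Set.disjoint_left]
    rintro _ ⟨i, hi, rfl⟩ ⟨j, hj, h⟩
    exact four_pow_ne_neg_four_pow h2 hi hj h.symm
  have hinj : Set.InjOn (fun i ↦ (4 : R) ^ i) (Set.Iio k) :=
    pow_injOn_Iio_orderOf.mono (Set.Iio_subset_Iio (Nat.div_le_self _ _))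
  have hk_card : (Set.Iio k).ncard = k := by simp [Set.ncard_eq_toFinset_card']
  have hinj_neg : Set.InjOn (fun i ↦ -(4 : R) ^ i) (Set.Iio k) := neg_injective.comp_injOn hinj
  rw [hunion, Set.ncard_union_eq hdisj, hinj.ncard_image, hinj_neg.ncard_image, hk_card, two_mul]

theorem hasDoublingDefect_three_zmod {q : ℕ} (hmod : q % 4 = 3)
    (horder : orderOf (4 : ZMod q) = (q - 1) / 2) : HasDoublingDefect (ZMod q) 3 := by
  have h2 : (2 : ZMod q) ≠ 0 := by
    have h := (ZMod.natCast_eq_zero_iff 2 q).not.2 fun h ↦ by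
      have := Nat.le_of_dvd two_pos h
      omega
    exact_mod_cast h
  refine ⟨_, isSymmDoublingFree_signedFourPowers, ?_⟩
  rw [ncard_signedFourPowers h2, horder, Nat.card_zmod]
  omega

lemma orderOf_four_of_safe_prime {p : ℕ} (hp : p.Prime) (hsafe : ((p - 1) / 2).Prime) :
    orderOf (4 : ZMod p) = (p - 1) / 2 := by
  have : Fact p.Prime := ⟨hp⟩
  have : Fact ((p - 1) / 2).Prime := ⟨hsafe⟩
  have hp5 : 5 ≤ p := by
    have := hsafe.two_le
    omega
  have hodd : p % 2 = 1 := Nat.odd_iff.1 (hp.odd_of_ne_two (by omega))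
  have h2 : ((2 : ℕ) : ZMod p) ≠ 0 := (ZMod.natCast_eq_zero_iff 2 p).not.2
    (Nat.not_dvd_of_pos_of_lt two_pos (by omega))
  have h3 : ((3 : ℕ) : ZMod p) ≠ 0 := (ZMod.natCast_eq_zero_iff 3 p).not.2
    (Nat.not_dvd_of_pos_of_lt three_pos (by omega))
  refine orderOf_eq_prime ?_ fun h ↦ h3 (by push_cast; linear_combination h)
  calc (4 : ZMod p) ^ ((p - 1) / 2)
      = ((2 : ℕ) : ZMod p) ^ (2 * ((p - 1) / 2)) := by rw [pow_mul]; norm_num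
    _ = ((2 : ℕ) : ZMod p) ^ (p - 1) := by congr 1; omega
    _ = 1 := ZMod.pow_card_sub_one_eq_one h2

end FourPowers

section Codes

variable {L : ℕ}

lemma mem_dstar {I : Finset (ZMod L)} {x : ZMod L} :
    x ∈ dstar I ↔ (∃ a ∈ I, ∃ b ∈ I, a - b = x) ∧ x ≠ 0 := by
  simp only [dstar, dset, mem_sdiff, mem_image, mem_product, mem_singleton, Prod.exists]
  grind

lemma sub_mem_dstar {I : Finset (ZMod L)} {a b : ZMod L} (ha : a ∈ I) (hb : b ∈ I)
    (hab : a ≠ b) : a - b ∈ dstar I :=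
  mem_dstar.2 ⟨⟨a, ha, b, hb, rfl⟩, sub_ne_zero.2 hab⟩

lemma neg_mem_dstar {I : Finset (ZMod L)} {x : ZMod L} (hx : x ∈ dstar I) : -x ∈ dstar I := by
  obtain ⟨⟨a, ha, b, hb, rfl⟩, hab⟩ := mem_dstar.1 hx
  rw [neg_sub]
  exact sub_mem_dstar hb ha (sub_ne_zero.1 hab).symm

lemma four_le_card_of_neg_mem {A : Type*} [AddCommGroup A] (hA : Odd (Nat.card A))
    {D : Finset A} (h0 : (0 : A) ∉ D) (hneg : ∀ x ∈ D, -x ∈ D) {u v : A} (hu : u ∈ D)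
    (hv : v ∈ D) (huv : u ≠ v) (huv' : u ≠ -v) : 4 ≤ #D := by
  classical
  have hne_neg : ∀ x ∈ D, x ≠ -x := fun x hx h ↦ by
    refine nsmul_ne_zero_of_coprime_card (Nat.coprime_two_right.2 hA) (x := x) ?_ ?_
    · rintro rfl
      exact h0 hx
    · rw [two_nsmul, ← eq_neg_iff_add_eq_zero]
      exact h
  calc 4 = #{u, -u, v, -v} := by
        have := hne_neg u hu
        have := hne_neg v hv
        grind
    _ ≤ #D := card_le_card (by grind)

lemma four_le_card_dstar (hodd : Odd L) (h3 : ¬ 3 ∣ L) {I : Finset (ZMod L)} (hI : #I = 3) :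
    4 ≤ #(dstar I) := by
  obtain ⟨a, b, c, hab, hac, hbc, rfl⟩ := card_eq_three.1 hI
  have four_le {u v : ZMod L} := four_le_card_of_neg_mem (D := dstar {a, b, c}) (u := u) (v := v)
    (by rwa [Nat.card_zmod]) (fun h ↦ (mem_dstar.1 h).2 rfl) fun _ ↦ neg_mem_dstar
  have hab_mem : a - b ∈ dstar {a, b, c} := sub_mem_dstar (by simp) (by simp) hab
  have hac_mem : a - c ∈ dstar {a, b, c} := sub_mem_dstar (by simp) (by simp) hac
  have hbc_mem : b - c ∈ dstar {a, b, c} := sub_mem_dstar (by simp) (by simp) hbc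
  by_cases h : a - b = b - c
  · refine four_le hab_mem hac_mem (fun h' ↦ hbc (by linear_combination -h')) fun h' ↦ ?_
    have h3L : (Nat.card (ZMod L)).Coprime 3 := by
      rw [Nat.card_zmod]
      exact ((Nat.Prime.coprime_iff_not_dvd Nat.prime_three).2 h3).symm
    refine nsmul_ne_zero_of_coprime_card h3L (sub_ne_zero.2 hab) ?_
    rw [nsmul_eq_mul]
    linear_combination h' + h
  · exact four_le hab_mem hbc_mem h fun h' ↦ hac (by linear_combination h')

theorem IsCAC.four_mul_card_lt (hodd : Odd L) (h3 : ¬ 3 ∣ L) {C : Finset (Finset (ZMod L))}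
    (hC : IsCAC L 3 C) : 4 * #C < L := by
  have : NeZero L := ⟨hodd.pos.ne'⟩
  have hsub : C.biUnion dstar ⊆ univ.erase 0 := by
    intro x hx
    obtain ⟨I, -, hxI⟩ := mem_biUnion.1 hx
    exact mem_erase.2 ⟨(mem_dstar.1 hxI).2, mem_univ x⟩
  calc 4 * #C = #C • 4 := by rw [smul_eq_mul, mul_comm]
    _ ≤ ∑ I ∈ C, #(dstar I) :=
      card_nsmul_le_sum C _ 4 fun I hI ↦ four_le_card_dstar hodd h3 (hC.1 I hI)
    _ = #(C.biUnion dstar) := (card_biUnion hC.2).symm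
    _ ≤ #(univ.erase (0 : ZMod L)) := card_le_card hsub
    _ < #(univ : Finset (ZMod L)) := card_erase_lt_of_mem (mem_univ 0)
    _ = L := by rw [card_univ, ZMod.card]

/-- The equi-difference codeword `{0, g, 2g}`. The generator is any residue here, whereas
`IsEquiDiff` asks for a natural number at most `L / 2`. -/
def equiDiffWord (g : ZMod L) : Finset (ZMod L) := {0, g, 2 • g}

lemma self_mem_dstar_equiDiffWord {g : ZMod L} (hg : g ≠ 0) : g ∈ dstar (equiDiffWord g) := by
  simpa using sub_mem_dstar (I := equiDiffWord g) (b := 0) (by simp [equiDiffWord])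
    (by simp [equiDiffWord]) hg

lemma eq_or_eq_of_mem_dstar_equiDiffWord {g x : ZMod L} (hx : x ∈ dstar (equiDiffWord g)) :
    (x = g ∨ x = -g) ∨ x = 2 • g ∨ x = 2 • -g := by
  obtain ⟨⟨a, ha, b, hb, rfl⟩, hne⟩ := mem_dstar.1 hx
  simp only [equiDiffWord, mem_insert, mem_singleton] at ha hb
  rcases ha with rfl | rfl | rfl <;> rcases hb with rfl | rfl | rfl <;> grind

lemma IsSymmDoublingFree.eq_or_eq_neg_of_mem_dstar (hodd : Odd L) {G : Set (ZMod L)}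
    (hG : IsSymmDoublingFree G) {g h x : ZMod L} (hg : g ∈ G) (hh : h ∈ G)
    (hxg : x ∈ dstar (equiDiffWord g)) (hxh : x ∈ dstar (equiDiffWord h)) : g = h ∨ g = -h := by
  have hinj := two_nsmul_injective_of_odd_card (A := ZMod L) (by rwa [Nat.card_zmod])
  -- Membership in `G` tells the differences `±y` from the differences `±2y`.
  have of_mem : x ∈ G → ∀ y ∈ G, x ∈ dstar (equiDiffWord y) → x = y ∨ x = -y := by
    rintro hx y hy hxy
    rcases eq_or_eq_of_mem_dstar_equiDiffWord hxy with h | rfl | rfl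
    exacts [h, absurd hx (hG.two_nsmul_notMem y hy),
      absurd hx (hG.two_nsmul_notMem (-y) (hG.neg_mem y hy))]
  have of_notMem : x ∉ G → ∀ y ∈ G, x ∈ dstar (equiDiffWord y) → x = 2 • y ∨ x = 2 • -y := by
    rintro hx y hy hxy
    rcases eq_or_eq_of_mem_dstar_equiDiffWord hxy with (rfl | rfl) | h
    exacts [absurd hy hx, absurd (hG.neg_mem y hy) hx, h]
  by_cases hx : x ∈ G
  · have := of_mem hx g hg hxg
    have := of_mem hx h hh hxh
    grind
  · have := of_notMem hx g hg hxg
    have := of_notMem hx h hh hxh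
    have := @hinj g h
    have := @hinj g (-h)
    grind

open Classical in
/-- One generator out of each pair `±g` of elements of `G`: the one in `[0, L / 2]`. -/
noncomputable def halfGenerators [NeZero L] (G : Set (ZMod L)) : Finset (ZMod L) :=
  {g | g ∈ G ∧ 2 * g.val ≤ L}

variable [NeZero L] {G : Set (ZMod L)}

lemma mem_halfGenerators {g : ZMod L} : g ∈ halfGenerators G ↔ g ∈ G ∧ 2 * g.val ≤ L := by
  simp [halfGenerators]

lemma two_mul_val_neg_le_iff (hodd : Odd L) {g : ZMod L} (hg : g ≠ 0) :
    2 * (-g).val ≤ L ↔ ¬ 2 * g.val ≤ L := by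
  have : NeZero g := ⟨hg⟩
  have := g.val_lt
  obtain ⟨k, hk⟩ := hodd
  rw [ZMod.val_neg_of_ne_zero]
  omega

lemma IsSymmDoublingFree.ncard_eq_two_mul_card_halfGenerators (hodd : Odd L)
    (hG : IsSymmDoublingFree G) : G.ncard = 2 * #(halfGenerators G) := by
  classical
  have hdisj : Disjoint (halfGenerators G) ((halfGenerators G).image Neg.neg) := by
    rw [Finset.disjoint_left]
    intro x hx hx'
    obtain ⟨y, hy, rfl⟩ := mem_image.1 hx'
    rw [mem_halfGenerators] at hx hy
    exact (two_mul_val_neg_le_iff hodd (hG.ne_zero hy.1)).1 hx.2 hy.2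
  have hunion : G = ↑(halfGenerators G ∪ (halfGenerators G).image Neg.neg) := by
    ext x
    simp only [coe_union, coe_image, Set.mem_union, mem_coe, Set.mem_image, mem_halfGenerators]
    refine ⟨fun hx ↦ ?_, ?_⟩
    · by_cases hval : 2 * x.val ≤ L
      · exact Or.inl ⟨hx, hval⟩
      · exact Or.inr ⟨-x, ⟨hG.neg_mem x hx,
          (two_mul_val_neg_le_iff hodd (hG.ne_zero hx)).2 hval⟩, neg_neg x⟩
    · rintro (⟨hx, -⟩ | ⟨y, ⟨hy, -⟩, rfl⟩)
      exacts [hx, hG.neg_mem y hy]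
  conv_lhs => rw [hunion]
  rw [Set.ncard_coe_finset, card_union_of_disjoint hdisj,
    card_image_of_injective _ neg_injective, two_mul]

/-- The code of the equi-difference codewords with generators in `G`, one for each pair `±g`. -/
noncomputable def equiDiffCode (G : Set (ZMod L)) : Finset (Finset (ZMod L)) :=
  (halfGenerators G).image equiDiffWord

lemma IsSymmDoublingFree.disjoint_dstar_equiDiffWord (hodd : Odd L) (hG : IsSymmDoublingFree G)
    {g h : ZMod L} (hg : g ∈ halfGenerators G) (hh : h ∈ halfGenerators G) (hgh : g ≠ h) :
    Disjoint (dstar (equiDiffWord g)) (dstar (equiDiffWord h)) := by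
  rw [mem_halfGenerators] at hg hh
  rw [Finset.disjoint_left]
  intro x hxg hxh
  rcases hG.eq_or_eq_neg_of_mem_dstar hodd hg.1 hh.1 hxg hxh with rfl | rfl
  · exact hgh rfl
  · exact (two_mul_val_neg_le_iff hodd (hG.ne_zero hh.1)).1 hg.2 hh.2

lemma IsSymmDoublingFree.isCAC_equiDiffCode (hodd : Odd L) (hG : IsSymmDoublingFree G) :
    IsCAC L 3 (equiDiffCode G) := by
  simp only [IsCAC, equiDiffCode, forall_mem_image]
  refine ⟨fun g hg ↦ ?_, fun g hg h hh hgh ↦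
    hG.disjoint_dstar_equiDiffWord hodd hg hh (ne_of_apply_ne _ hgh)⟩
  have hg0 : g ≠ 0 := hG.ne_zero (mem_halfGenerators.1 hg).1
  have h2g : 2 • g ≠ 0 :=
    nsmul_ne_zero_of_coprime_card (by rwa [Nat.card_zmod, Nat.coprime_two_right]) hg0
  have hg2g : g ≠ 2 • g := fun h ↦ hg0 (by simpa only [two_nsmul, left_eq_add] using h)
  exact card_eq_three.2 ⟨0, g, 2 • g, hg0.symm, h2g.symm, hg2g, rfl⟩

lemma IsSymmDoublingFree.isEquiDiff_of_mem_equiDiffCode (hG : IsSymmDoublingFree G)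
    {I : Finset (ZMod L)} (hI : I ∈ equiDiffCode G) : IsEquiDiff I := by
  obtain ⟨g, hg, rfl⟩ := mem_image.1 hI
  rw [mem_halfGenerators] at hg
  refine ⟨g.val, ?_, hg.2, by simp [equiDiffWord]⟩
  exact Nat.pos_of_ne_zero ((ZMod.val_ne_zero g).2 (hG.ne_zero hg.1))

lemma IsSymmDoublingFree.card_equiDiffCode (hodd : Odd L) (hG : IsSymmDoublingFree G) :
    #(equiDiffCode G) = #(halfGenerators G) := by
  refine card_image_of_injOn fun g hg h hh hgh ↦ ?_
  by_contra hne
  have hg_mem := self_mem_dstar_equiDiffWord (hG.ne_zero (mem_halfGenerators.1 hg).1)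
  exact Finset.disjoint_left.1 (hG.disjoint_dstar_equiDiffWord hodd hg hh hne) hg_mem
    (hgh ▸ hg_mem)

end Codes

theorem HasDoublingDefect.MCAC_eq_and_MeCAC_eq {L d : ℕ} (hL : HasDoublingDefect (ZMod L) d)
    (hd : Odd d) (hd4 : d < 4) (h3 : ¬ 3 ∣ L) :
    MCAC L 3 = (L - d) / 4 ∧ MeCAC L 3 = (L - d) / 4 := by
  have hodd : Odd L := Nat.card_zmod L ▸ hL.odd_card hd
  have : NeZero L := ⟨hodd.pos.ne'⟩
  obtain ⟨G, hG, hcard⟩ := hL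
  have hL_eq : L = 4 * #(equiDiffCode G) + d := by
    rw [Nat.card_zmod, hG.ncard_eq_two_mul_card_halfGenerators hodd] at hcard
    rw [hG.card_equiDiffCode hodd]
    omega
  have hcode : #(equiDiffCode G) = (L - d) / 4 := by omega
  have upper : ∀ C, IsCAC L 3 C → #C ≤ (L - d) / 4 := fun C hC ↦ by
    have := hC.four_mul_card_lt hodd h3
    omega
  have hcac := hG.isCAC_equiDiffCode hodd
  refine ⟨IsGreatest.csSup_eq ⟨⟨_, hcac, hcode⟩, ?_⟩,
    IsGreatest.csSup_eq ⟨⟨_, hcac, fun _ ↦ hG.isEquiDiff_of_mem_equiDiffCode, hcode⟩, ?_⟩⟩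
  · rintro _ ⟨C, hC, rfl⟩
    exact upper C hC
  · rintro _ ⟨C, hC, -, rfl⟩
    exact upper C hC

/-- The order condition says that `2` generates the units modulo `q` up to sign. It holds for every
safe prime, but also for instance for `q = 19`, where `(q - 1) / 2 = 9` is composite. -/
theorem MCAC_one_safe_prime_general (L q : ℕ) (h3 : ¬ 3 ∣ L) (hdvd : q ∣ L) (hmod : q % 4 = 3)
    (horder : orderOf (4 : ZMod q) = (q - 1) / 2) (hsq : ¬ q ^ 2 ∣ L)
    (hp : ∀ p : ℕ, p.Prime → p ∣ L → p ≠ q → p % 8 = 5) :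
    MCAC L 3 = (L - 3) / 4 ∧ MeCAC L 3 = (L - 3) / 4 := by
  obtain ⟨m, rfl⟩ := hdvd
  have : NeZero q := ⟨by rintro rfl; simp at hmod⟩
  have : NeZero m := ⟨by rintro rfl; simp at hsq⟩
  have hm : HasDoublingDefect (ZMod m) 1 := hasDoublingDefect_one_zmod fun p hprime hpm ↦
    hp p hprime (hpm.mul_left q) fun hpq ↦ hsq (by
      rw [sq]
      exact mul_dvd_mul_left q (hpq ▸ hpm))
  have hL : HasDoublingDefect (ZMod (q * m)) 3 :=
    hm.zmod_mul (hasDoublingDefect_three_zmod hmod horder)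
  exact hL.MCAC_eq_and_MeCAC_eq (by decide) (by norm_num) h3

theorem MCAC_one_safe_prime (L phat : ℕ) (hL : 3 < L) (hodd : Odd L) (h3 : ¬ 3 ∣ L)
    (hphat : phat.Prime) (hdvd : phat ∣ L) (hsafe : ((phat - 1) / 2).Prime)
    (hmod : phat % 4 = 3) (hsq : ¬ phat ^ 2 ∣ L)
    (hp : ∀ p : ℕ, p.Prime → p ∣ L → p ≠ phat → p % 8 = 5) :
    MCAC L 3 = (L - 3) / 4 ∧ MeCAC L 3 = (L - 3) / 4 :=
  MCAC_one_safe_prime_general L phat h3 hdvd hmod (orderOf_four_of_safe_prime hphat hsafe) hsq hp
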